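/- Let γ > 0, suppose u* ∈ ℝⁿ satisfies AᵀAu* = Aᵀb and Lu* = g, suppose A has trivial kernel (full column rank, m ≥ n), and let λ_min > 0 be the smallest eigenvalue of the symmetric positive definite matrix AᵀA. Let ũ_γ be a solution of the stabilized-regularized linear system ((I + γAᵀA)AᵀA + γLᵀL) u = (I + γAᵀA)Aᵀb̃ + γLᵀg with perturbed right-hand data b̃ ∈ ℝᵐ, and assume the corresponding system with unperturbed data b also admits a solution. Then ‖u* − ũ_γ‖ ≤ (1/√λ_min) ‖(I + γAAᵀ)(b − b̃)‖. -/

import Mathlib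

open scoped Matrix RealInnerProductSpace

/-- Multiplication of a Euclidean vector by a real matrix, landing in Euclidean space
(so that `‖·‖` and `⟪·,·⟫` denote the Euclidean norm and inner product). -/
noncomputable def mulE {m n : ℕ} (A : Matrix (Fin m) (Fin n) ℝ)
    (v : EuclideanSpace ℝ (Fin n)) : EuclideanSpace ℝ (Fin m) :=
  Matrix.toEuclideanLin A v

theorem mulE_mul' {m n k : ℕ} (A : Matrix (Fin m) (Fin n) ℝ) (B : Matrix (Fin n) (Fin k) ℝ)
    (v : EuclideanSpace ℝ (Fin k)) : mulE (A * B) v = mulE A (mulE B v) := by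
  simp [mulE, Matrix.toLpLin_apply, Matrix.mulVec_mulVec]

theorem mulE_add' {m n : ℕ} (A B : Matrix (Fin m) (Fin n) ℝ)
    (v : EuclideanSpace ℝ (Fin n)) : mulE (A + B) v = mulE A v + mulE B v := by
  simp [mulE]

theorem mulE_smul' {m n : ℕ} (c : ℝ) (A : Matrix (Fin m) (Fin n) ℝ)
    (v : EuclideanSpace ℝ (Fin n)) : mulE (c • A) v = c • mulE A v := by
  simp [mulE]

theorem mulE_one' {n : ℕ} (v : EuclideanSpace ℝ (Fin n)) : mulE 1 v = v := by
  simp [mulE, Matrix.toLpLin_apply]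

theorem mulE_vadd {m n : ℕ} (A : Matrix (Fin m) (Fin n) ℝ)
    (v w : EuclideanSpace ℝ (Fin n)) : mulE A (v + w) = mulE A v + mulE A w := by
  simp [mulE]

theorem mulE_vsub {m n : ℕ} (A : Matrix (Fin m) (Fin n) ℝ)
    (v w : EuclideanSpace ℝ (Fin n)) : mulE A (v - w) = mulE A v - mulE A w := by
  simp [mulE]

theorem mulE_vsmul {m n : ℕ} (A : Matrix (Fin m) (Fin n) ℝ) (c : ℝ)
    (v : EuclideanSpace ℝ (Fin n)) : mulE A (c • v) = c • mulE A v := by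
  simp [mulE]

theorem mulE_inner {m n : ℕ} (A : Matrix (Fin m) (Fin n) ℝ)
    (v : EuclideanSpace ℝ (Fin m)) (w : EuclideanSpace ℝ (Fin n)) :
    ⟪mulE Aᵀ v, w⟫ = ⟪v, mulE A w⟫ := by
  have h : Aᵀ = Aᴴ := by ext; simp
  rw [h, mulE, Matrix.toEuclideanLin_conjTranspose_eq_adjoint, LinearMap.adjoint_inner_left]
  rfl

open scoped MatrixOrder in
theorem mulE_rayleigh {m n : ℕ} (A : Matrix (Fin m) (Fin n) ℝ) (l : ℝ)
    (hl : IsLeast (spectrum ℝ (Aᵀ * A)) l) (e : EuclideanSpace ℝ (Fin n)) :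
    l * ‖e‖ ^ 2 ≤ ‖mulE A e‖ ^ 2 := by
  have hs : IsSelfAdjoint (Aᵀ * A) := by
    have h : Aᵀ = Aᴴ := by ext; simp
    rw [h]; exact Matrix.isHermitian_conjTranspose_mul_self A
  have hps : (Aᵀ * A - l • (1 : Matrix (Fin n) (Fin n) ℝ)).PosSemidef := by
    have h2 : algebraMap ℝ (Matrix (Fin n) (Fin n) ℝ) l ≤ Aᵀ * A :=
      algebraMap_le_of_le_spectrum (fun x hx => hl.2 hx) hs
    rw [Matrix.le_iff, Algebra.algebraMap_eq_smul_one] at h2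
    exact h2
  have h3 := hps.dotProduct_mulVec_nonneg e.ofLp
  have h4 : ⟪e, mulE (Aᵀ * A - l • (1 : Matrix (Fin n) (Fin n) ℝ)) e⟫
      = star e.ofLp ⬝ᵥ ((Aᵀ * A - l • (1 : Matrix (Fin n) (Fin n) ℝ)) *ᵥ e.ofLp) := by
    rw [EuclideanSpace.inner_eq_star_dotProduct, dotProduct_comm]; rfl
  rw [← h4, sub_eq_add_neg, ← neg_smul, mulE_add', mulE_smul', mulE_one', mulE_mul',
    inner_add_right, inner_smul_right, real_inner_comm, mulE_inner, real_inner_self_eq_norm_sq,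
    real_inner_self_eq_norm_sq] at h3
  linarith

/-- Let `γ > 0`, let `u⋆` satisfy `AᵀAu⋆ = Aᵀb` and `Lu⋆ = g`, suppose `A` has trivial
kernel (full column rank, `m ≥ n`) and `λmin > 0` is the smallest eigenvalue of `AᵀA`.
If `u'` solves the stabilized-regularized system with perturbed data `b'` and the
corresponding system with unperturbed data `b` also admits a solution, then
`‖u⋆ − u'‖ ≤ (1/√λmin) ‖(I + γAAᵀ)(b − b')‖`. -/
theorem stmt13 {m n p : ℕ} (A : Matrix (Fin m) (Fin n) ℝ)
    (b b' : EuclideanSpace ℝ (Fin m))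
    (L : Matrix (Fin p) (Fin n) ℝ) (g : EuclideanSpace ℝ (Fin p))
    (γ : ℝ) (hγ : 0 < γ)
    (ustar : EuclideanSpace ℝ (Fin n))
    (hnormal : mulE Aᵀ (mulE A ustar) = mulE Aᵀ b)
    (hreg : mulE L ustar = g)
    (hmn : n ≤ m) (hker : LinearMap.ker (Matrix.mulVecLin A) = ⊥)
    (lmin : ℝ) (hlmin : IsLeast (spectrum ℝ (Aᵀ * A)) lmin) (hlminpos : 0 < lmin)
    (u' : EuclideanSpace ℝ (Fin n))
    (hu' : mulE ((1 + γ • (Aᵀ * A)) * (Aᵀ * A) + γ • (Lᵀ * L)) u'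
        = mulE (1 + γ • (Aᵀ * A)) (mulE Aᵀ b') + γ • mulE Lᵀ g)
    (hex : ∃ u : EuclideanSpace ℝ (Fin n),
      mulE ((1 + γ • (Aᵀ * A)) * (Aᵀ * A) + γ • (Lᵀ * L)) u
        = mulE (1 + γ • (Aᵀ * A)) (mulE Aᵀ b) + γ • mulE Lᵀ g) :
    ‖ustar - u'‖ ≤ (1 / Real.sqrt lmin) * ‖mulE (1 + γ • (A * Aᵀ)) (b - b')‖ := by
  set e := ustar - u' with he
  set w := mulE (1 + γ • (A * Aᵀ)) (b - b') with hw
  have key : mulE Aᵀ (mulE A e) + γ • mulE Aᵀ (mulE A (mulE Aᵀ (mulE A e)))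
      + γ • mulE Lᵀ (mulE L e) = mulE Aᵀ w := by
    simp only [mulE_add', mulE_mul', mulE_smul', mulE_one'] at hu'
    rw [he, hw]
    simp only [mulE_add', mulE_mul', mulE_smul', mulE_one', mulE_vadd, mulE_vsub, mulE_vsmul,
      hnormal, hreg]
    simp only [smul_sub]
    linear_combination (norm := module) -hu'
  have h := congrArg (fun x => ⟪x, e⟫) key
  simp only [inner_add_left, real_inner_smul_left, mulE_inner] at h
  rw [← mulE_inner A (mulE A (mulE Aᵀ (mulE A e))) e] at h
  have h5 : ⟪mulE Aᵀ (mulE A (mulE Aᵀ (mulE A e))), e⟫ = ‖mulE Aᵀ (mulE A e)‖ ^ 2 := by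
    have := mulE_inner Aᵀ (mulE Aᵀ (mulE A e)) (mulE A e)
    rw [Matrix.transpose_transpose] at this
    rw [mulE_inner, this, real_inner_self_eq_norm_sq]
  rw [h5, real_inner_self_eq_norm_sq, real_inner_self_eq_norm_sq] at h
  have h6 := real_inner_le_norm w (mulE A e)
  have h7 : ‖mulE A e‖ ^ 2 ≤ ‖w‖ * ‖mulE A e‖ := by
    have : 0 ≤ γ * ‖mulE Aᵀ (mulE A e)‖ ^ 2 := by positivity
    have : 0 ≤ γ * ‖mulE L e‖ ^ 2 := by positivity
    linarith
  have h8 : ‖mulE A e‖ ≤ ‖w‖ := by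
    by_contra! hc
    nlinarith [norm_nonneg w]
  have h9 := mulE_rayleigh A lmin hlmin e
  have hs : 0 < Real.sqrt lmin := Real.sqrt_pos.2 hlminpos
  rw [one_div, inv_mul_eq_div, le_div_iff₀ hs]
  refine le_trans ?_ h8
  refine (sq_le_sq₀ (by positivity) (norm_nonneg _)).1 ?_
  rw [mul_pow, Real.sq_sqrt hlminpos.le]
  linarith
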